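/- arXiv:0806.0312 — 12 statements merged into one kernel-verified Lean document; each statement's English description precedes it below -/
import Mathlib

section
/- Let t₁ ∈ ℝ and let H : [t₁,∞) → ℝ be a function such that |H| is integrable on [t₁,∞). If y : [t₁,∞) → ℝ is differentiable with y(t) > 0 for all t ≥ t₁ and satisfies the differential inequality |y′(t)| ≤ √3·|H(t)|·y(t) for all t ≥ t₁, then y is bounded above on [t₁,∞) and the integral ∫_{t₁}^{T} 1/y(t) dt tends to +∞ as T → ∞ (equivalently, 1/y is not integrable on [t₁,∞)). -/
open Filter Topology Set MeasureTheory intervalIntegral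

/-- If `|H|` is integrable on `[t₁,∞)` and `y > 0` satisfies
`|y′| ≤ √3·|H|·y` on `[t₁,∞)`, then `y` is bounded above there and
`∫_{t₁}^{T} 1/y` tends to `+∞` as `T → ∞` (equivalently, `1/y` is not
integrable on `[t₁,∞)`). -/
theorem hubble_integrability_implies_completeness
    (t₁ : ℝ) (H y : ℝ → ℝ)
    (hH : IntegrableOn (fun t => |H t|) (Set.Ici t₁))
    (hy_diff : ∀ t ∈ Set.Ici t₁, DifferentiableAt ℝ y t)
    (hy_pos : ∀ t ∈ Set.Ici t₁, 0 < y t)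
    (hy_ineq : ∀ t ∈ Set.Ici t₁, |deriv y t| ≤ Real.sqrt 3 * |H t| * y t) :
    (∃ M : ℝ, ∀ t ∈ Set.Ici t₁, y t ≤ M) ∧
    Tendsto (fun T => ∫ t in t₁..T, 1 / y t) atTop atTop ∧
    ¬ IntegrableOn (fun t => 1 / y t) (Set.Ici t₁) := by
  have hcont : ContinuousOn y (Set.Ici t₁) := fun t ht =>
    (hy_diff t ht).continuousAt.continuousWithinAt
  have hφ : IntegrableOn (fun t => Real.sqrt 3 * |H t|) (Set.Ici t₁) := hH.const_mul _
  have hbd : ∃ M : ℝ, ∀ t ∈ Set.Ici t₁, y t ≤ M := by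
    refine ⟨Real.exp (Real.log (y t₁) + ∫ t in Set.Ici t₁, Real.sqrt 3 * |H t|), fun T hT => ?_⟩
    have hT' : t₁ ≤ T := hT
    rw [← Real.log_le_iff_le_exp (hy_pos T hT)]
    have h1 : Real.log (y T) - Real.log (y t₁) ≤ ∫ t in t₁..T, Real.sqrt 3 * |H t| := by
      refine sub_le_integral_of_hasDeriv_right_of_le (g := fun t => Real.log (y t))
        (g' := fun t => deriv y t / y t) hT' ?_ ?_ ?_ ?_
      · exact (hcont.mono Icc_subset_Ici_self).log fun x hx => (hy_pos x hx.1).ne'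
      · intro x hx
        exact ((hy_diff x hx.1.le).hasDerivAt.log (hy_pos x hx.1.le).ne').hasDerivWithinAt
      · exact hφ.mono_set Icc_subset_Ici_self
      · intro x hx
        rw [div_le_iff₀ (hy_pos x hx.1.le)]
        exact (le_abs_self _).trans (hy_ineq x hx.1.le)
    have h2 : ∫ t in t₁..T, Real.sqrt 3 * |H t| ≤ ∫ t in Set.Ici t₁, Real.sqrt 3 * |H t| := by
      rw [intervalIntegral.integral_of_le hT']
      refine setIntegral_mono_set hφ (Eventually.of_forall fun x => ?_) ?_
      · show (0 : ℝ) ≤ Real.sqrt 3 * |H x|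
        positivity
      · exact (Ioc_subset_Icc_self.trans Icc_subset_Ici_self).eventuallyLE
    linarith
  have hlim : Tendsto (fun T => ∫ t in t₁..T, 1 / y t) atTop atTop := by
    obtain ⟨M, hM⟩ := hbd
    have hMpos : 0 < M := (hy_pos t₁ self_mem_Ici).trans_le (hM t₁ self_mem_Ici)
    have hlin : Tendsto (fun T : ℝ => (T - t₁) * (1 / M)) atTop atTop :=
      (tendsto_atTop_add_const_right atTop (-t₁) tendsto_id).atTop_mul_const (by positivity)
    refine tendsto_atTop_mono' atTop ?_ hlin
    filter_upwards [eventually_ge_atTop t₁] with T hT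
    have hc : ContinuousOn (fun t => 1 / y t) (Set.Icc t₁ T) :=
      continuousOn_const.div (hcont.mono Icc_subset_Ici_self) fun x hx => (hy_pos x hx.1).ne'
    have := intervalIntegral.integral_mono_on (μ := volume) (f := fun _ => 1 / M) hT
      intervalIntegrable_const (hc.intervalIntegrable_of_Icc hT)
      fun x hx => one_div_le_one_div_of_le (hy_pos x hx.1) (hM x hx.1)
    simpa using this
  refine ⟨hbd, hlim, fun hint => ?_⟩
  have h := intervalIntegral_tendsto_integral_Ioi t₁ (hint.mono_set Ioi_subset_Ici_self) tendsto_id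
  exact not_tendsto_nhds_of_tendsto_atTop hlim _ h
end

section
/- Let t₁ < t₂ be reals, let k ∈ ℝ, and let a, φ : (t₁,t₂) → ℝ be twice differentiable with a(t) > 0, satisfying the massless scalar-field FRW equations (a′/a)² = φ′²/6 − k/a² and φ″ + 3(a′/a)φ′ = 0 on (t₁,t₂). Then |φ′(t)| → ∞ as t → t₁⁺ if and only if, as t → t₁⁺: a(t) → 0, |a′(t)/a(t)| → ∞, |E|(t) → ∞ and |D|(t) → ∞, where |E| = φ′²/√3 and |D| = φ′²/(2√3) are the electric parts of the Bel-Robinson energy (past-collapse singularity of type (S₁,N₁,B₁)). -/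
open Filter Topology Set

/-- In an isotropic universe with a massless scalar field
(Friedmann equation `H² = φ′²/6 − k/a²`, continuity equation `φ″ + 3Hφ′ = 0`
on `(t₁,t₂)`, `a > 0`), `|φ′| → ∞` as `t → t₁⁺` iff `a → 0`, `|H| → ∞`,
`|E| = φ′²/√3 → ∞` and `|D| = φ′²/(2√3) → ∞` as `t → t₁⁺`
(past-collapse singularity of type `(S₁,N₁,B₁)`). -/
theorem massless_scalar_field_past_collapse
    (t₁ t₂ k : ℝ) (hlt : t₁ < t₂) (a φ : ℝ → ℝ)
    (ha : ∀ t ∈ Set.Ioo t₁ t₂, DifferentiableAt ℝ a t)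
    (ha' : ∀ t ∈ Set.Ioo t₁ t₂, DifferentiableAt ℝ (deriv a) t)
    (hφ : ∀ t ∈ Set.Ioo t₁ t₂, DifferentiableAt ℝ φ t)
    (hφ' : ∀ t ∈ Set.Ioo t₁ t₂, DifferentiableAt ℝ (deriv φ) t)
    (hapos : ∀ t ∈ Set.Ioo t₁ t₂, 0 < a t)
    (hFried : ∀ t ∈ Set.Ioo t₁ t₂,
      (deriv a t / a t) ^ 2 = (deriv φ t) ^ 2 / 6 - k / (a t) ^ 2)
    (hcont : ∀ t ∈ Set.Ioo t₁ t₂,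
      deriv (deriv φ) t + 3 * (deriv a t / a t) * deriv φ t = 0) :
    Tendsto (fun t => |deriv φ t|) (𝓝[>] t₁) atTop ↔
      (Tendsto a (𝓝[>] t₁) (𝓝 0) ∧
       Tendsto (fun t => |deriv a t / a t|) (𝓝[>] t₁) atTop ∧
       Tendsto (fun t => (deriv φ t) ^ 2 / Real.sqrt 3) (𝓝[>] t₁) atTop ∧
       Tendsto (fun t => (deriv φ t) ^ 2 / (2 * Real.sqrt 3)) (𝓝[>] t₁) atTop) := by
  have hmem : ∀ᶠ t in 𝓝[>] t₁, t ∈ Set.Ioo t₁ t₂ := Ioo_mem_nhdsGT hlt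
  have h3 : 0 < Real.sqrt 3 := Real.sqrt_pos.mpr (by norm_num)
  have hder : ∀ t ∈ Set.Ioo t₁ t₂, HasDerivAt (fun t => deriv φ t * a t ^ 3) 0 t := by
    intro t ht
    have h1 := (hφ' t ht).hasDerivAt.mul ((ha t ht).hasDerivAt.pow 3)
    refine h1.congr_deriv ?_
    have hp := hapos t ht
    have hc := hcont t ht
    have e : deriv (deriv φ) t = -(3 * (deriv a t / a t) * deriv φ t) := by linarith
    simp only [Pi.pow_apply]
    rw [e]
    field_simp
    push_cast
    ring
  obtain ⟨c, hc⟩ : ∃ c, ∀ t ∈ Set.Ioo t₁ t₂, deriv φ t * a t ^ 3 = c :=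
    isOpen_Ioo.exists_is_const_of_deriv_eq_zero isPreconnected_Ioo
      (fun t ht => (hder t ht).differentiableAt.differentiableWithinAt)
      (fun t ht => (hder t ht).deriv)
  constructor
  · intro h
    have hsq : Tendsto (fun t => (deriv φ t) ^ 2) (𝓝[>] t₁) atTop := by
      have := (tendsto_pow_atTop (α := ℝ) (n := 2) (by norm_num)).comp h
      refine this.congr fun t => ?_
      simp
    have hc0 : c ≠ 0 := by
      obtain ⟨t, ht, h1⟩ := (hmem.and (h.eventually_gt_atTop 0)).exists
      rw [← hc t ht]
      exact mul_ne_zero (abs_pos.mp h1) (pow_pos (hapos t ht) 3).ne'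
    have ha0 : Tendsto a (𝓝[>] t₁) (𝓝 0) := by
      rw [Metric.tendsto_nhds]
      intro ε hε
      filter_upwards [hmem, h.eventually_gt_atTop (|c| / ε ^ 3)] with t ht h1
      have hp := hapos t ht
      rw [Real.dist_eq, sub_zero, abs_of_pos hp]
      by_contra hcon
      push Not at hcon
      have h2 : ε ^ 3 ≤ a t ^ 3 := pow_le_pow_left₀ hε.le hcon 3
      have h4 : |deriv φ t| * a t ^ 3 = |c| := by
        rw [← hc t ht, abs_mul, abs_of_pos (pow_pos hp 3)]
      rw [div_lt_iff₀ (pow_pos hε 3)] at h1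
      have := mul_le_mul_of_nonneg_left h2 (abs_nonneg (deriv φ t))
      linarith
    refine ⟨ha0, ?_, hsq.atTop_div_const h3, hsq.atTop_div_const (by positivity)⟩
    have hk : Tendsto (fun t => k * a t ^ 4) (𝓝[>] t₁) (𝓝 0) := by
      simpa using (ha0.pow 4).const_mul k
    have hcpos : 0 < c ^ 2 / 12 := by positivity
    refine tendsto_atTop_mono' _ ?_ (h.atTop_div_const (show (0:ℝ) < 4 by norm_num))
    filter_upwards [hmem, hk.eventually_lt_const hcpos] with t ht h1
    have hp := hapos t ht
    have h5 : k / a t ^ 2 ≤ deriv φ t ^ 2 / 12 := by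
      rw [div_le_iff₀ (by positivity)]
      rw [← hc t ht] at h1
      have h4 : 0 < a t ^ 4 := by positivity
      refine le_of_mul_le_mul_right ?_ h4
      nlinarith
    have hF := hFried t ht
    have : |deriv φ t / 4| ≤ |deriv a t / a t| := by
      apply sq_le_sq.mp
      rw [hF]
      nlinarith [sq_nonneg (deriv φ t)]
    rwa [abs_div, abs_of_pos (show (0:ℝ) < 4 by norm_num)] at this
  · rintro ⟨-, -, hE, -⟩
    have hsq : Tendsto (fun t => (deriv φ t) ^ 2) (𝓝[>] t₁) atTop := by
      refine (hE.atTop_mul_const h3).congr fun t => ?_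
      field_simp
    exact (Real.tendsto_sqrt_atTop.comp hsq).congr fun t => Real.sqrt_sq_eq_abs _
end

section
/- Let t₁ < t₂, let γ > 0, λ < 1 and k ∈ {0,−1} (flat or open universe), and let a, μ : (t₁,t₂) → ℝ be differentiable with a(t) > 0 and μ(t) > 0, satisfying the continuity equation μ′ + 3(a′/a)·γμ^λ = 0 (fluid with equation of state p + μ = γμ^λ) and the Friedmann equation (a′/a)² = μ/3 − k/a². Then μ(t) → ∞ as t → t₁⁺ if and only if, as t → t₁⁺: a(t) → 0, |a′(t)/a(t)| → ∞, |E|(t) → ∞ and |D|(t) → ∞, where |E| = |−2μ + 3γμ^λ|/(2√3) and |D| = μ/√3 (past-collapse singularity of type (S₁,N₁,B₁)). -/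
open Filter Topology Set

/-- In an open or flat (`k = 0` or `k = −1`) FRW universe filled
with a fluid with equation of state `p + μ = γμ^λ` (`γ > 0`, `λ < 1`), i.e.
satisfying `μ′ + 3H·γμ^λ = 0` and `H² = μ/3 − k/a²` on `(t₁,t₂)`,
`μ → ∞` as `t → t₁⁺` iff `a → 0`, `|H| → ∞`,
`|E| = |−2μ + 3γμ^λ|/(2√3) → ∞` and `|D| = μ/√3 → ∞` as `t → t₁⁺`
(past-collapse singularity of type `(S₁,N₁,B₁)`). -/
theorem graduated_inflation_past_collapse
    (t₁ t₂ γ lam k : ℝ) (hlt : t₁ < t₂) (hγ : 0 < γ) (hlam : lam < 1)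
    (hk : k = 0 ∨ k = -1) (a μ : ℝ → ℝ)
    (ha : ∀ t ∈ Set.Ioo t₁ t₂, DifferentiableAt ℝ a t)
    (hμ : ∀ t ∈ Set.Ioo t₁ t₂, DifferentiableAt ℝ μ t)
    (hapos : ∀ t ∈ Set.Ioo t₁ t₂, 0 < a t)
    (hμpos : ∀ t ∈ Set.Ioo t₁ t₂, 0 < μ t)
    (hcont : ∀ t ∈ Set.Ioo t₁ t₂,
      deriv μ t + 3 * (deriv a t / a t) * (γ * μ t ^ lam) = 0)
    (hFried : ∀ t ∈ Set.Ioo t₁ t₂,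
      (deriv a t / a t) ^ 2 = μ t / 3 - k / (a t) ^ 2) :
    Tendsto μ (𝓝[>] t₁) atTop ↔
      (Tendsto a (𝓝[>] t₁) (𝓝 0) ∧
       Tendsto (fun t => |deriv a t / a t|) (𝓝[>] t₁) atTop ∧
       Tendsto (fun t => |-2 * μ t + 3 * γ * μ t ^ lam| / (2 * Real.sqrt 3))
         (𝓝[>] t₁) atTop ∧
       Tendsto (fun t => μ t / Real.sqrt 3) (𝓝[>] t₁) atTop) := by
  have h3 : 0 < Real.sqrt 3 := Real.sqrt_pos.mpr (by norm_num)
  constructor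
  swap
  · rintro ⟨-, -, -, h⟩
    have h' := h.atTop_mul_const h3
    refine h'.congr (fun t => ?_)
    field_simp
  intro h
  have hmem : Set.Ioo t₁ t₂ ∈ 𝓝[>] t₁ := Ioo_mem_nhdsGT hlt
  refine ⟨?_, ?_, ?_, h.atTop_div_const h3⟩
  · -- the conserved quantity
    set F : ℝ → ℝ := fun t => Real.log (a t) + μ t ^ (1 - lam) / (3 * γ * (1 - lam)) with hF
    have hl : 0 < 1 - lam := by linarith
    have hFd : ∀ t ∈ Set.Ioo t₁ t₂, HasDerivAt F 0 t := by
      intro t ht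
      have h1 := (ha t ht).hasDerivAt.log (hapos t ht).ne'
      have h2 := ((hμ t ht).hasDerivAt.rpow_const (p := 1 - lam)
        (Or.inl (hμpos t ht).ne')).div_const (3 * γ * (1 - lam))
      have h4 := h1.add h2
      refine h4.congr_deriv ?_
      have hc := hcont t ht
      have hd : deriv μ t = -(3 * (deriv a t / a t) * (γ * μ t ^ lam)) := by linarith
      have hm : μ t ^ lam * μ t ^ (1 - lam - 1) = 1 := by
        rw [← Real.rpow_add (hμpos t ht)]
        simp
      rw [hd]
      have : -(3 * (deriv a t / a t) * (γ * μ t ^ lam)) * (1 - lam) * μ t ^ (1 - lam - 1)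
          / (3 * γ * (1 - lam)) = -(deriv a t / a t) * (μ t ^ lam * μ t ^ (1 - lam - 1)) := by
        field_simp
      rw [this, hm]
      ring
    obtain ⟨t₀, ht₀⟩ : (Set.Ioo t₁ t₂).Nonempty := Set.nonempty_Ioo.mpr hlt
    have hconst : ∀ t ∈ Set.Ioo t₁ t₂, F t = F t₀ := by
      intro t ht
      exact isOpen_Ioo.is_const_of_deriv_eq_zero isPreconnected_Ioo
        (fun x hx => (hFd x hx).differentiableAt.differentiableWithinAt)
        (fun x hx => (hFd x hx).deriv) ht ht₀
    have hpow : Tendsto (fun t => μ t ^ (1 - lam) / (3 * γ * (1 - lam))) (𝓝[>] t₁) atTop :=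
      ((tendsto_rpow_atTop hl).comp h).atTop_div_const (by positivity)
    have hneg : Tendsto (fun t => F t₀ - μ t ^ (1 - lam) / (3 * γ * (1 - lam)))
        (𝓝[>] t₁) atBot := by
      simpa [sub_eq_add_neg] using
        tendsto_atBot_add_const_left _ (F t₀) (tendsto_neg_atTop_atBot.comp hpow)
    refine (Real.tendsto_exp_atBot.comp hneg).congr' ?_
    filter_upwards [hmem] with t ht
    have := hconst t ht
    simp only [Function.comp]
    rw [← this, hF]
    simp only [add_sub_cancel_right]
    exact Real.exp_log (hapos t ht)
  · have hs : Tendsto (fun t => Real.sqrt (μ t / 3)) (𝓝[>] t₁) atTop :=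
      Real.tendsto_sqrt_atTop.comp (h.atTop_div_const (by norm_num))
    refine tendsto_atTop_mono' _ ?_ hs
    filter_upwards [hmem] with t ht
    rw [← Real.sqrt_sq_eq_abs, hFried t ht]
    apply Real.sqrt_le_sqrt
    have : 0 ≤ -k / (a t) ^ 2 := div_nonneg (by rcases hk with h | h <;> simp [h]) (sq_nonneg _)
    rw [neg_div] at this
    linarith
  · refine Tendsto.atTop_div_const (by positivity) ?_
    have hz : Tendsto (fun t => μ t ^ (-(1 - lam))) (𝓝[>] t₁) (𝓝 0) :=
      (tendsto_rpow_neg_atTop (by linarith)).comp h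
    have hz2 : Tendsto (fun t => 2 - 3 * γ * μ t ^ (-(1 - lam))) (𝓝[>] t₁) (𝓝 2) := by
      simpa using (hz.const_mul (3 * γ)).const_sub 2
    refine tendsto_atTop_mono' _ ?_ (h.atTop_mul_pos (by norm_num) hz2)
    filter_upwards [hmem] with t ht
    have hm : μ t ^ lam = μ t * μ t ^ (-(1 - lam)) := by
      nth_rewrite 2 [← Real.rpow_one (μ t)]
      rw [← Real.rpow_add (hμpos t ht)]
      congr 1
      ring
    rw [hm]
    refine le_trans (le_of_eq ?_) (neg_le_abs _)
    ring
end

section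
/- Let t₀ < t_s, let w ∈ ℝ, k ∈ ℝ, and let a, μ : (t₀,t_s) → ℝ be differentiable with a(t) > 0 and μ(t) > 0, satisfying the continuity equation μ′ + 3(a′/a)(1+w)μ = 0 (fluid with equation of state p = wμ) and the Friedmann equation (a′/a)² = μ/3 − k/a². Then [w < −1 and |w|·μ(t) → ∞ as t → t_s⁻] if and only if, as t → t_s⁻: a(t) → ∞, |a′(t)/a(t)| → ∞, |E|(t) → ∞ and |D|(t) → ∞, where |E| = |1+3w|·μ/(2√3) and |D| = μ/√3 (big-rip singularity of type (S₂,N₃,B₁)). -/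
open Filter Topology Set

/-- In an FRW universe filled with a fluid with equation of state
`p = wμ` (so `μ′ + 3H(1+w)μ = 0`, `H² = μ/3 − k/a²` on `(t₀,t_s)`),
`w < −1` and `|w|·μ → ∞` as `t → t_s⁻` iff `a → ∞`, `|H| → ∞`,
`|E| = |1+3w|·μ/(2√3) → ∞` and `|D| = μ/√3 → ∞` as `t → t_s⁻`
(big-rip singularity of type `(S₂,N₃,B₁)`). -/
theorem phantom_big_rip
    (t₀ t_s w k : ℝ) (hlt : t₀ < t_s) (a μ : ℝ → ℝ)
    (ha : ∀ t ∈ Set.Ioo t₀ t_s, DifferentiableAt ℝ a t)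
    (hμ : ∀ t ∈ Set.Ioo t₀ t_s, DifferentiableAt ℝ μ t)
    (hapos : ∀ t ∈ Set.Ioo t₀ t_s, 0 < a t)
    (hμpos : ∀ t ∈ Set.Ioo t₀ t_s, 0 < μ t)
    (hcont : ∀ t ∈ Set.Ioo t₀ t_s,
      deriv μ t + 3 * (deriv a t / a t) * (1 + w) * μ t = 0)
    (hFried : ∀ t ∈ Set.Ioo t₀ t_s,
      (deriv a t / a t) ^ 2 = μ t / 3 - k / (a t) ^ 2) :
    (w < -1 ∧ Tendsto (fun t => |w| * μ t) (𝓝[<] t_s) atTop) ↔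
      (Tendsto a (𝓝[<] t_s) atTop ∧
       Tendsto (fun t => |deriv a t / a t|) (𝓝[<] t_s) atTop ∧
       Tendsto (fun t => |1 + 3 * w| * μ t / (2 * Real.sqrt 3)) (𝓝[<] t_s) atTop ∧
       Tendsto (fun t => μ t / Real.sqrt 3) (𝓝[<] t_s) atTop) := by
  have hne : (𝓝[<] t_s).NeBot := inferInstance
  have hev : ∀ᶠ t in 𝓝[<] t_s, t ∈ Set.Ioo t₀ t_s := Ioo_mem_nhdsLT hlt
  have hs3 : 0 < Real.sqrt 3 := by positivity
  obtain ⟨C, hC⟩ : ∃ C : ℝ, ∀ t ∈ Set.Ioo t₀ t_s,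
      Real.log (μ t) + 3 * (1 + w) * Real.log (a t) = C := by
    have hd : ∀ t ∈ Set.Ioo t₀ t_s,
        HasDerivAt (fun t => Real.log (μ t) + 3 * (1 + w) * Real.log (a t)) 0 t := by
      intro t ht
      have h1 := ((hμ t ht).hasDerivAt.log (hμpos t ht).ne').add
        (((ha t ht).hasDerivAt.log (hapos t ht).ne').const_mul (3 * (1 + w)))
      have h2 := hcont t ht
      have h3 := (hμpos t ht).ne'
      have h4 : deriv μ t = - (3 * (deriv a t / a t) * (1 + w) * μ t) := by linarith
      have h5 : deriv μ t / μ t + 3 * (1 + w) * (deriv a t / a t) = 0 := by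
        rw [h4, neg_div, mul_div_assoc, div_self h3]
        ring
      rw [h5] at h1
      exact h1
    refine ⟨Real.log (μ ((t₀ + t_s) / 2)) + 3 * (1 + w) * Real.log (a ((t₀ + t_s) / 2)), ?_⟩
    intro t ht
    have hm : (t₀ + t_s) / 2 ∈ Set.Ioo t₀ t_s := ⟨by linarith, by linarith⟩
    exact isOpen_Ioo.is_const_of_deriv_eq_zero isPreconnected_Ioo
      (fun x hx => (hd x hx).differentiableAt.differentiableWithinAt)
      (fun x hx => (hd x hx).deriv) ht hm
  constructor
  · rintro ⟨hw, hT⟩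
    have hwp : 0 < |w| := abs_pos.mpr (by linarith)
    have hμT : Tendsto μ (𝓝[<] t_s) atTop := (tendsto_const_mul_atTop_of_pos hwp).1 hT
    have haT : Tendsto a (𝓝[<] t_s) atTop := by
      have hlog := Real.tendsto_log_atTop.comp hμT
      have h1 : Tendsto (fun t => (Real.log (μ t) + -C) / (-(3 * (1 + w)))) (𝓝[<] t_s) atTop :=
        (tendsto_atTop_add_const_right _ (-C) hlog).atTop_div_const (by linarith)
      refine (Real.tendsto_exp_atTop.comp h1).congr' ?_
      filter_upwards [hev] with t ht
      have h2 := hC t ht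
      have h3 : (Real.log (μ t) + -C) / (-(3 * (1 + w))) = Real.log (a t) := by
        rw [div_eq_iff (by linarith)]
        linarith
      simp only [Function.comp]
      rw [h3, Real.exp_log (hapos t ht)]
    refine ⟨haT, ?_, ?_, hμT.atTop_div_const hs3⟩
    · have hk : Tendsto (fun t => - (k / (a t) ^ 2)) (𝓝[<] t_s) (𝓝 (-0)) :=
        (((tendsto_pow_atTop two_ne_zero).comp haT).const_div_atTop k).neg
      have h1 : Tendsto (fun t => μ t / 3 + - (k / (a t) ^ 2)) (𝓝[<] t_s) atTop :=
        (hμT.atTop_div_const (by norm_num)).atTop_add hk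
      refine (Real.tendsto_sqrt_atTop.comp h1).congr' ?_
      filter_upwards [hev] with t ht
      simp only [Function.comp]
      rw [← sub_eq_add_neg, ← hFried t ht, Real.sqrt_sq_eq_abs]
    · have hp : 0 < |1 + 3 * w| := abs_pos.mpr (by linarith)
      exact (hμT.const_mul_atTop hp).atTop_div_const (by positivity)
  · rintro ⟨haT, -, -, hD⟩
    have hμT : Tendsto μ (𝓝[<] t_s) atTop := by
      refine (hD.atTop_mul_const hs3).congr ?_
      intro t
      field_simp
    have hw : w < -1 := by
      by_contra hw
      have hw : -1 ≤ w := not_lt.mp hw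
      have hlog := Real.tendsto_log_atTop.comp hμT
      obtain ⟨t, ht, h1, h2⟩ := (hev.and ((haT.eventually_ge_atTop 1).and
        (hlog.eventually_gt_atTop C))).exists
      have h3 := hC t ht
      have h4 : 0 ≤ 3 * (1 + w) * Real.log (a t) :=
        mul_nonneg (by linarith) (Real.log_nonneg h1)
      simp only [Function.comp] at h2
      linarith
    exact ⟨hw, hμT.const_mul_atTop (abs_pos.mpr (by linarith))⟩
end

section
/- Let t₁ < t₀, let C > 0, γ > 0, μ₀ > 0 and k ∈ ℝ, and let a, μ : (t₁,t₀) → ℝ be differentiable with a(t) > 0 and 0 < μ(t) < μ₀, satisfying the continuity equation μ′ = 3(a′/a)·C·(μ₀−μ)^{−γ} (fluid with equation of state p + μ = −C(μ₀−μ)^{−γ}) and the Friedmann equation (a′/a)² = μ/3 − k/a². Then μ(t) → μ₀ as t → t₀⁻ if and only if, as t → t₀⁻: a(t) tends to a finite positive limit, a′(t)/a(t) tends to a finite limit, |D|(t) = μ(t)/√3 tends to a finite limit, and |E|(t) = |2μ + 3C(μ₀−μ)^{−γ}|/(2√3) → ∞ (sudden singularity of type (S₃,N₂,B₃)). -/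
open Filter Topology Set

/-- In an FRW universe filled with a fluid with equation of state
`p + μ = −C(μ₀−μ)^{−γ}` (so `μ′ = 3H·C(μ₀−μ)^{−γ}`, `H² = μ/3 − k/a²` on
`(t₁,t₀)`, with `0 < μ < μ₀`), `μ → μ₀` as `t → t₀⁻` iff, as `t → t₀⁻`:
`a` tends to a finite positive limit, `H = a′/a` tends to a finite limit,
`|D| = μ/√3` tends to a finite limit, and
`|E| = |2μ + 3C(μ₀−μ)^{−γ}|/(2√3) → ∞`
(sudden singularity of type `(S₃,N₂,B₃)`). -/
theorem sudden_singularity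
    (t₁ t₀ C γ μ₀ k : ℝ) (hlt : t₁ < t₀) (hC : 0 < C) (hγ : 0 < γ) (hμ₀ : 0 < μ₀)
    (a μ : ℝ → ℝ)
    (ha : ∀ t ∈ Set.Ioo t₁ t₀, DifferentiableAt ℝ a t)
    (hμ : ∀ t ∈ Set.Ioo t₁ t₀, DifferentiableAt ℝ μ t)
    (hapos : ∀ t ∈ Set.Ioo t₁ t₀, 0 < a t)
    (hμpos : ∀ t ∈ Set.Ioo t₁ t₀, 0 < μ t)
    (hμlt : ∀ t ∈ Set.Ioo t₁ t₀, μ t < μ₀)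
    (hcont : ∀ t ∈ Set.Ioo t₁ t₀,
      deriv μ t = 3 * (deriv a t / a t) * C * (μ₀ - μ t) ^ (-γ))
    (hFried : ∀ t ∈ Set.Ioo t₁ t₀,
      (deriv a t / a t) ^ 2 = μ t / 3 - k / (a t) ^ 2) :
    Tendsto μ (𝓝[<] t₀) (𝓝 μ₀) ↔
      ((∃ a_s : ℝ, 0 < a_s ∧ Tendsto a (𝓝[<] t₀) (𝓝 a_s)) ∧
       (∃ L : ℝ, Tendsto (fun t => deriv a t / a t) (𝓝[<] t₀) (𝓝 L)) ∧
       (∃ d : ℝ, Tendsto (fun t => μ t / Real.sqrt 3) (𝓝[<] t₀) (𝓝 d)) ∧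
       Tendsto (fun t => |2 * μ t + 3 * C * (μ₀ - μ t) ^ (-γ)| / (2 * Real.sqrt 3))
         (𝓝[<] t₀) atTop) := by
  have hev : ∀ᶠ t in 𝓝[<] t₀, t ∈ Set.Ioo t₁ t₀ := Ioo_mem_nhdsLT hlt
  have h3 : 0 < Real.sqrt 3 := by positivity
  constructor
  · intro hlim
    have hsub : Tendsto (fun t => μ₀ - μ t) (𝓝[<] t₀) (𝓝 0) := by
      simpa using hlim.const_sub μ₀
    have hsub' : Tendsto (fun t => μ₀ - μ t) (𝓝[<] t₀) (𝓝[>] 0) := by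
      refine tendsto_nhdsWithin_iff.2 ⟨hsub, ?_⟩
      filter_upwards [hev] with t ht
      exact sub_pos.2 (hμlt t ht)
    -- conserved quantity
    obtain ⟨c, hc⟩ : ∃ c : ℝ, ∀ t ∈ Set.Ioo t₁ t₀,
        Real.log (a t) + (μ₀ - μ t) ^ (γ + 1) / (3 * C * (γ + 1)) = c := by
      have hd : ∀ t ∈ Set.Ioo t₁ t₀, HasDerivAt
          (fun t => Real.log (a t) + (μ₀ - μ t) ^ (γ + 1) / (3 * C * (γ + 1))) 0 t := by
        intro t ht
        have hp : 0 < μ₀ - μ t := sub_pos.2 (hμlt t ht)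
        have h1 := (ha t ht).hasDerivAt.log (hapos t ht).ne'
        have h2 := (((hμ t ht).hasDerivAt.const_sub μ₀).rpow_const
          (p := γ + 1) (Or.inl hp.ne')).div_const (3 * C * (γ + 1))
        refine (h1.add h2).congr_deriv ?_
        rw [hcont t ht, Real.rpow_neg hp.le, add_sub_cancel_right]
        have hq : 0 < (μ₀ - μ t) ^ γ := Real.rpow_pos_of_pos hp _
        have hat := hapos t ht
        have hg : γ + 1 ≠ 0 := by positivity
        field_simp
        ring
      obtain ⟨c, hc⟩ := isOpen_Ioo.exists_is_const_of_deriv_eq_zero isPreconnected_Ioo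
        (fun t ht => (hd t ht).differentiableAt.differentiableWithinAt)
        (fun t ht => (hd t ht).deriv)
      exact ⟨c, hc⟩
    have hA : Tendsto a (𝓝[<] t₀) (𝓝 (Real.exp c)) := by
      have h1 : Tendsto (fun t => Real.exp (c - (μ₀ - μ t) ^ (γ + 1) / (3 * C * (γ + 1))))
          (𝓝[<] t₀) (𝓝 (Real.exp c)) := by
        have h2 := hsub.rpow_const (p := γ + 1) (Or.inr (by positivity))
        rw [Real.zero_rpow (by positivity)] at h2
        have h4 := (h2.div_const (3 * C * (γ + 1))).const_sub c
        rw [zero_div, sub_zero] at h4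
        exact (Real.continuous_exp.tendsto c).comp h4
      refine h1.congr' ?_
      filter_upwards [hev] with t ht
      rw [← hc t ht, add_sub_cancel_right, Real.exp_log (hapos t ht)]
    refine ⟨⟨_, Real.exp_pos c, hA⟩, ?_, ⟨_, hlim.div_const _⟩, ?_⟩
    · obtain ⟨h, hh⟩ : ∃ h : ℝ, Tendsto (fun t => (deriv a t / a t) ^ 2) (𝓝[<] t₀) (𝓝 h) := by
        refine ⟨_, Tendsto.congr' ?_ ((hlim.div_const 3).sub
          ((tendsto_const_nhds (x := k)).div (hA.pow 2) (by positivity)))⟩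
        filter_upwards [hev] with t ht
        exact (hFried t ht).symm
      have habs : Tendsto (fun t => |deriv a t / a t|) (𝓝[<] t₀) (𝓝 (Real.sqrt h)) := by
        refine (hh.sqrt).congr fun t => ?_
        exact Real.sqrt_sq_eq_abs _
      have hh0 : 0 ≤ h := ge_of_tendsto' hh fun t => sq_nonneg _
      rcases hh0.eq_or_lt with h0 | h0
      · refine ⟨0, ?_⟩
        rw [← h0, Real.sqrt_zero] at habs
        exact (tendsto_zero_iff_abs_tendsto_zero _).2 habs
      · obtain ⟨s, hs, hs'⟩ := (mem_nhdsLT_iff_exists_Ioo_subset' hlt).1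
          ((hh.eventually (lt_mem_nhds h0)).and hev)
        have hne : ∀ t ∈ Set.Ioo s t₀, deriv a t ≠ 0 := by
          intro t ht h5
          have := (hs' ht).1
          simp [h5] at this
        have hsev : ∀ᶠ t in 𝓝[<] t₀, t ∈ Set.Ioo s t₀ := Ioo_mem_nhdsLT hs
        rcases hasDerivWithinAt_forall_lt_or_forall_gt_of_forall_ne (convex_Ioo s t₀)
          (fun t ht => (ha t (hs' ht).2).hasDerivAt.hasDerivWithinAt) hne with h6 | h6
        · refine ⟨_, habs.neg.congr' ?_⟩
          filter_upwards [hsev] with t ht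
          rw [abs_of_neg (div_neg_of_neg_of_pos (h6 t ht) (hapos t (hs' ht).2)), neg_neg]
        · refine ⟨_, habs.congr' ?_⟩
          filter_upwards [hsev] with t ht
          rw [abs_of_pos (div_pos (h6 t ht) (hapos t (hs' ht).2))]
    · refine Tendsto.atTop_div_const (by positivity) ?_
      have h1 : Tendsto (fun t => (μ₀ - μ t) ^ (-γ)) (𝓝[<] t₀) atTop :=
        (tendsto_rpow_neg_nhdsGT_zero (neg_lt_zero.2 hγ)).comp hsub'
      refine tendsto_atTop_mono' _ ?_ (h1.const_mul_atTop (show 0 < 3 * C by positivity))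
      filter_upwards [hev] with t ht
      refine le_trans ?_ (le_abs_self _)
      linarith [hμpos t ht]
  · rintro ⟨-, -, ⟨d, hd⟩, hE⟩
    have hm : Tendsto μ (𝓝[<] t₀) (𝓝 (d * Real.sqrt 3)) := by
      refine (hd.mul_const (Real.sqrt 3)).congr fun t => ?_
      field_simp
    by_cases heq : d * Real.sqrt 3 = μ₀
    · rwa [heq] at hm
    · exfalso
      have h1 := (hm.const_sub μ₀).rpow_const (p := -γ) (Or.inl (sub_ne_zero.2 (Ne.symm heq)))
      have h2 := (((hm.const_mul 2).add (h1.const_mul (3 * C))).abs).div_const (2 * Real.sqrt 3)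
      exact not_tendsto_nhds_of_tendsto_atTop hE _ h2
end

section
/- Let t₀ < t_s, let B > 0, β > 1 and k ∈ ℝ, and let a, μ : (t₀,t_s) → ℝ be differentiable with a(t) > 0 and μ(t) > 0, satisfying the continuity equation μ′ = 3(a′/a)·B·μ^β (fluid with equation of state p + μ = −Bμ^β) and the Friedmann equation (a′/a)² = μ/3 − k/a². Then μ(t) → ∞ as t → t_s⁻ if and only if, as t → t_s⁻: a(t) tends to a finite positive limit, |a′(t)/a(t)| → ∞, |E|(t) = |2μ + 3Bμ^β|/(2√3) → ∞ and |D|(t) = μ/√3 → ∞ (sudden-rip singularity of type (S₂,N₂,B₁)). -/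
open Filter Topology Set

/-- In an FRW universe filled with a fluid with equation of state
`p + μ = −Bμ^β` with `β > 1` (so `μ′ = 3H·Bμ^β`, `H² = μ/3 − k/a²` on
`(t₀,t_s)`), `μ → ∞` as `t → t_s⁻` iff, as `t → t_s⁻`: `a` tends to a finite
positive limit, `|H| → ∞`, `|E| = |2μ + 3Bμ^β|/(2√3) → ∞` and
`|D| = μ/√3 → ∞` (sudden-rip singularity of type `(S₂,N₂,B₁)`). -/
theorem sudden_rip_singularity
    (t₀ t_s B β k : ℝ) (hlt : t₀ < t_s) (hB : 0 < B) (hβ : 1 < β)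
    (a μ : ℝ → ℝ)
    (ha : ∀ t ∈ Set.Ioo t₀ t_s, DifferentiableAt ℝ a t)
    (hμ : ∀ t ∈ Set.Ioo t₀ t_s, DifferentiableAt ℝ μ t)
    (hapos : ∀ t ∈ Set.Ioo t₀ t_s, 0 < a t)
    (hμpos : ∀ t ∈ Set.Ioo t₀ t_s, 0 < μ t)
    (hcont : ∀ t ∈ Set.Ioo t₀ t_s,
      deriv μ t = 3 * (deriv a t / a t) * B * μ t ^ β)
    (hFried : ∀ t ∈ Set.Ioo t₀ t_s,
      (deriv a t / a t) ^ 2 = μ t / 3 - k / (a t) ^ 2) :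
    Tendsto μ (𝓝[<] t_s) atTop ↔
      ((∃ a_s : ℝ, 0 < a_s ∧ Tendsto a (𝓝[<] t_s) (𝓝 a_s)) ∧
       Tendsto (fun t => |deriv a t / a t|) (𝓝[<] t_s) atTop ∧
       Tendsto (fun t => |2 * μ t + 3 * B * μ t ^ β| / (2 * Real.sqrt 3))
         (𝓝[<] t_s) atTop ∧
       Tendsto (fun t => μ t / Real.sqrt 3) (𝓝[<] t_s) atTop) := by
  have hev : Set.Ioo t₀ t_s ∈ 𝓝[<] t_s := Ioo_mem_nhdsLT hlt
  have h3 : 0 < Real.sqrt 3 := Real.sqrt_pos.mpr (by norm_num)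
  constructor
  · intro hT
    have hder : ∀ t ∈ Set.Ioo t₀ t_s, HasDerivAt
        (fun t => Real.log (a t) - μ t ^ (1 - β) / (3 * B * (1 - β))) 0 t := by
      intro t ht
      have h1 := (ha t ht).hasDerivAt.log (hapos t ht).ne'
      have h2 := ((hμ t ht).hasDerivAt.rpow_const (p := 1 - β)
        (Or.inl (hμpos t ht).ne')).div_const (3 * B * (1 - β))
      have hb : (1 - β) ≠ 0 := by linarith
      have hp : μ t ^ β * μ t ^ (1 - β - 1) = 1 := by
        rw [← Real.rpow_add (hμpos t ht)]
        simp
      have h4 : 3 * (deriv a t / a t) * B * μ t ^ β * (1 - β) * μ t ^ (1 - β - 1)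
          / (3 * B * (1 - β)) = deriv a t / a t := by
        rw [div_eq_iff (by positivity)]
        linear_combination (3 * (deriv a t / a t) * B * (1 - β)) * hp
      rw [hcont t ht, h4] at h2
      have h9 := h1.sub h2
      rw [sub_self] at h9
      exact h9
    obtain ⟨c, hc⟩ : ∃ c, ∀ t ∈ Set.Ioo t₀ t_s,
        Real.log (a t) - μ t ^ (1 - β) / (3 * B * (1 - β)) = c := by
      apply isOpen_Ioo.exists_is_const_of_deriv_eq_zero isPreconnected_Ioo
      · intro t ht
        exact (hder t ht).differentiableAt.differentiableWithinAt
      · intro t ht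
        exact (hder t ht).deriv
    have hlim : Tendsto a (𝓝[<] t_s) (𝓝 (Real.exp c)) := by
      have hp : Tendsto (fun t => μ t ^ (1 - β)) (𝓝[<] t_s) (𝓝 0) := by
        have := (tendsto_rpow_neg_atTop (y := β - 1) (by linarith)).comp hT
        simpa [Function.comp_def] using this
      have h5 : Tendsto (fun t => Real.exp (c + μ t ^ (1 - β) / (3 * B * (1 - β))))
          (𝓝[<] t_s) (𝓝 (Real.exp c)) := by
        have h6 := (hp.div_const (3 * B * (1 - β))).const_add c
        rw [zero_div, add_zero] at h6
        exact (Real.continuous_exp.tendsto c).comp h6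
      refine h5.congr' ?_
      filter_upwards [hev] with t ht
      rw [← hc t ht, sub_add_cancel, Real.exp_log (hapos t ht)]
    refine ⟨⟨Real.exp c, Real.exp_pos c, hlim⟩, ?_, ?_, hT.atTop_div_const h3⟩
    · have hk : Tendsto (fun t => - (k / (a t) ^ 2)) (𝓝[<] t_s)
          (𝓝 (-(k / (Real.exp c) ^ 2))) :=
        (tendsto_const_nhds.div (hlim.pow 2) (by positivity)).neg
      have hs : Tendsto (fun t => μ t / 3 + - (k / (a t) ^ 2)) (𝓝[<] t_s) atTop :=
        (hT.atTop_div_const (by norm_num)).atTop_add hk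
      refine (Real.tendsto_sqrt_atTop.comp hs).congr' ?_
      filter_upwards [hev] with t ht
      simp only [Function.comp]
      rw [← sub_eq_add_neg, ← hFried t ht, Real.sqrt_sq_eq_abs]
    · apply Tendsto.atTop_div_const (by positivity)
      refine tendsto_atTop_mono' _ ?_ hT
      filter_upwards [hev] with t ht
      have h7 := hμpos t ht
      have h8 : 0 < 3 * B * μ t ^ β := by positivity
      exact le_trans (by linarith) (le_abs_self _)
  · rintro ⟨-, -, -, hD⟩
    refine (hD.atTop_mul_const h3).congr ?_
    intro t
    field_simp
end

section
/- Let t_i < t_s and let a : [t_i,t_s] → ℝ be differentiable with a(t) > 0 for all t. Define the affine parameter λ(t) = ∫_{t_i}^{t} a(u)/a(t_s) du and H = a′/a. Then ∫_{t_i}^{t_s} H(t)·(a(t)/a(t_s)) dt = 1 − a(t_i)/a(t_s) < 1. Consequently, if the averaged Hubble rate H_av = (1/(λ(t_s) − λ(t_i)))·∫_{t_i}^{t_s} H(t)·(a(t)/a(t_s)) dt is positive, then λ(t_s) − λ(t_i) < 1/H_av, i.e. the affine length of the corresponding past-directed null geodesic is finite and bounded by 1/H_av. -/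
open Filter Topology Set MeasureTheory intervalIntegral

/-- For a differentiable `a > 0` on `[t_i,t_s]`, with affine
parameter `λ(t) = ∫_{t_i}^{t} a(u)/a(t_s) du` and `H = a′/a`, one has
`∫_{t_i}^{t_s} H·(a/a(t_s)) = 1 − a(t_i)/a(t_s) < 1`; hence if the averaged
Hubble rate `H_av = (∫ H·(a/a(t_s)))/(λ(t_s) − λ(t_i))` is positive, then
`λ(t_s) − λ(t_i) < 1/H_av`: the affine length of the past-directed null
geodesic is finite and bounded by `1/H_av`. -/
theorem averaged_hubble_incompleteness
    (t_i t_s : ℝ) (hlt : t_i < t_s) (a : ℝ → ℝ)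
    (ha : ∀ t ∈ Set.Icc t_i t_s, DifferentiableAt ℝ a t)
    (hapos : ∀ t ∈ Set.Icc t_i t_s, 0 < a t)
    (hint : IntervalIntegrable (deriv a) MeasureTheory.volume t_i t_s) :
    ∀ lam : ℝ → ℝ, (∀ t, lam t = ∫ u in t_i..t, a u / a t_s) →
      (∫ t in t_i..t_s, (deriv a t / a t) * (a t / a t_s)) = 1 - a t_i / a t_s ∧
      1 - a t_i / a t_s < 1 ∧
      (∀ Hav : ℝ,
        Hav = (∫ t in t_i..t_s, (deriv a t / a t) * (a t / a t_s)) /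
                (lam t_s - lam t_i) →
        0 < Hav → lam t_s - lam t_i < 1 / Hav) := by
  intro lam hlam
  have hs : 0 < a t_s := hapos t_s ⟨hlt.le, le_rfl⟩
  have hi : 0 < a t_i := hapos t_i ⟨le_rfl, hlt.le⟩
  have h1 : (∫ t in t_i..t_s, (deriv a t / a t) * (a t / a t_s)) = 1 - a t_i / a t_s := by
    have hcongr : (∫ t in t_i..t_s, (deriv a t / a t) * (a t / a t_s))
        = ∫ t in t_i..t_s, deriv a t / a t_s := by
      apply intervalIntegral.integral_congr
      intro t ht
      rw [Set.uIcc_of_le hlt.le] at ht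
      have := (hapos t ht).ne'
      have := hs.ne'
      simp only
      field_simp
    rw [hcongr, intervalIntegral.integral_div,
      intervalIntegral.integral_deriv_eq_sub (by rwa [Set.uIcc_of_le hlt.le]) hint,
      sub_div, div_self hs.ne']
  have h2 : 1 - a t_i / a t_s < 1 := by
    have := div_pos hi hs
    linarith
  refine ⟨h1, h2, ?_⟩
  intro Hav hH hpos
  have hL0 : 0 ≤ lam t_s - lam t_i := by
    rw [hlam t_s, hlam t_i, intervalIntegral.integral_same, sub_zero]
    exact intervalIntegral.integral_nonneg hlt.le
      (fun u hu => (div_pos (hapos u hu) hs).le)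
  have hL : lam t_s - lam t_i ≠ 0 := by
    intro h
    rw [h, div_zero] at hH
    exact hpos.ne' hH
  rw [h1, eq_div_iff hL] at hH
  rw [lt_div_iff₀ hpos, mul_comm, hH]
  exact h2
end

section
/- Let w < −1, A > 0, a₀ > 0 and t₀ ∈ ℝ. Set X(t) = a₀^{3(1+w)/2} + (3(1+w)√A/2)·(t − t₀) and t_rip = t₀ + 2·a₀^{3(1+w)/2}/(3√A·(−1−w)). Then X(t) > 0 on [t₀, t_rip) with X(t_rip) = 0, and the function a(t) = X(t)^{2/(3(1+w))} on (t₀, t_rip) satisfies the Friedmann equation (a′(t)/a(t))² = A·a(t)^{−3(w+1)} for all t, and a(t) → ∞ as t → t_rip⁻, while a′(t)/a(t) = √A·X(t)^{−1} → +∞ as t → t_rip⁻. Thus a flat phantom FRW universe reaches a big-rip singularity at the finite time t_rip, which decreases as a₀ and |w| increase. -/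
open Filter Topology Set Real

/-- For `w < −1`, `A > 0`, `a₀ > 0`, with
`X(t) = a₀^{3(1+w)/2} + (3(1+w)√A/2)(t − t₀)` and
`t_rip = t₀ + 2a₀^{3(1+w)/2}/(3√A(−1−w))`, one has `X > 0` on `[t₀,t_rip)`,
`X(t_rip) = 0`, and `a(t) = X(t)^{2/(3(1+w))}` satisfies the Friedmann
equation `(a′/a)² = A·a^{−3(w+1)}` on `(t₀,t_rip)`, with `a → ∞` and
`a′/a = √A·X⁻¹ → +∞` as `t → t_rip⁻`: a big-rip singularity at the finite
time `t_rip`. -/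
theorem phantom_big_rip_explicit
    (w A a₀ t₀ : ℝ) (hw : w < -1) (hA : 0 < A) (ha₀ : 0 < a₀) :
    ∀ X : ℝ → ℝ,
      (∀ t, X t = a₀ ^ (3 * (1 + w) / 2) +
        3 * (1 + w) * Real.sqrt A / 2 * (t - t₀)) →
    ∀ t_rip : ℝ,
      t_rip = t₀ + 2 * a₀ ^ (3 * (1 + w) / 2) / (3 * Real.sqrt A * (-1 - w)) →
    ∀ a : ℝ → ℝ,
      (∀ t, a t = X t ^ (2 / (3 * (1 + w)))) →
      (∀ t ∈ Set.Ico t₀ t_rip, 0 < X t) ∧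
      X t_rip = 0 ∧
      (∀ t ∈ Set.Ioo t₀ t_rip,
        (deriv a t / a t) ^ 2 = A * a t ^ (-(3 * (w + 1)))) ∧
      Tendsto a (𝓝[<] t_rip) atTop ∧
      (∀ t ∈ Set.Ioo t₀ t_rip, deriv a t / a t = Real.sqrt A * (X t)⁻¹) ∧
      Tendsto (fun t => deriv a t / a t) (𝓝[<] t_rip) atTop := by
  intro X hX t_rip hrip a ha
  have hs : 0 < Real.sqrt A := Real.sqrt_pos.mpr hA
  have hw1 : 0 < -1 - w := by linarith
  have hw2 : 1 + w ≠ 0 := by linarith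
  have hc : 0 < 3 * (-1 - w) * Real.sqrt A / 2 := by positivity
  -- `X` is linear and vanishes at `t_rip`
  have hXlin : ∀ t, X t = 3 * (-1 - w) * Real.sqrt A / 2 * (t_rip - t) := by
    intro t
    have h : 3 * (-1 - w) * Real.sqrt A / 2 * (t_rip - t₀) = a₀ ^ (3 * (1 + w) / 2) := by
      rw [hrip]
      field_simp
      ring
    rw [hX, ← h]
    ring
  have hpos : ∀ t, t < t_rip → 0 < X t := by
    intro t ht
    rw [hXlin]
    exact mul_pos hc (by linarith)
  have hXrip : X t_rip = 0 := by rw [hXlin]; ring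
  have hXd : ∀ t, HasDerivAt X (3 * (1 + w) * Real.sqrt A / 2) t := by
    intro t
    have h := (((hasDerivAt_id t).sub_const t₀).const_mul
      (3 * (1 + w) * Real.sqrt A / 2)).const_add (a₀ ^ (3 * (1 + w) / 2))
    rw [mul_one] at h
    have e : X = fun t => a₀ ^ (3 * (1 + w) / 2) +
        3 * (1 + w) * Real.sqrt A / 2 * (t - t₀) := funext hX
    rw [e]
    exact h
  have hH : ∀ t, t < t_rip → deriv a t / a t = Real.sqrt A * (X t)⁻¹ := by
    intro t ht
    have hx := hpos t ht
    have h := (hXd t).rpow_const (p := 2 / (3 * (1 + w))) (Or.inl hx.ne')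
    have e : a = fun t => X t ^ (2 / (3 * (1 + w))) := funext ha
    rw [← e] at h
    have hd := h.deriv
    rw [hd, ha, Real.rpow_sub_one hx.ne']
    have hp : X t ^ (2 / (3 * (1 + w))) ≠ 0 := (Real.rpow_pos_of_pos hx _).ne'
    generalize X t ^ (2 / (3 * (1 + w))) = y at hp
    have hx' := hx.ne'
    field_simp
  have hXt : Tendsto X (𝓝[<] t_rip) (𝓝[>] 0) := by
    rw [tendsto_nhdsWithin_iff]
    refine ⟨?_, ?_⟩
    · have h := (hXd t_rip).continuousAt.tendsto
      rw [hXrip] at h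
      exact h.mono_left nhdsWithin_le_nhds
    · filter_upwards [self_mem_nhdsWithin] with t ht
      exact hpos t ht
  have hXinv : Tendsto (fun t => (X t)⁻¹) (𝓝[<] t_rip) atTop :=
    tendsto_inv_nhdsGT_zero.comp hXt
  refine ⟨fun t ht => hpos t ht.2, hXrip, ?_, ?_, fun t ht => hH t ht.2, ?_⟩
  · intro t ht
    have hx := hpos t ht.2
    rw [hH t ht.2, ha, ← Real.rpow_mul hx.le]
    have e : 2 / (3 * (1 + w)) * -(3 * (w + 1)) = -2 := by
      rw [add_comm w 1]
      field_simp
    rw [e, Real.rpow_neg hx.le, Real.rpow_two, mul_pow, Real.sq_sqrt hA.le, inv_pow]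
  · have hq : 0 < -(2 / (3 * (1 + w))) := by
      have : 2 / (3 * (1 + w)) < 0 := div_neg_of_pos_of_neg (by norm_num) (by linarith)
      linarith
    refine ((tendsto_rpow_atTop hq).comp hXinv).congr' ?_
    filter_upwards [self_mem_nhdsWithin] with t ht
    have hx := hpos t ht
    rw [ha, Function.comp_apply, Real.inv_rpow hx.le, Real.rpow_neg hx.le, inv_inv]
  · refine (hXinv.const_mul_atTop hs).congr' ?_
    filter_upwards [self_mem_nhdsWithin] with t ht
    exact (hH t ht).symm
end

section
/- Let α ≠ 0, A > 0 and λ > 0 be reals. Define, for Υ ∈ (0,∞), x(Υ) = α·Υ^{1/4}, y(Υ) = (α/4)·Υ^{−3/4}, z(Υ) = (√3/(4√(Aλ)))·Υ^{−1}. Then (x,y,z) is an exact solution of the scalar-field braneworld system x′ = y, y′ = −λA·z²·x, z′ = −4y·z/x on (0,∞), and it satisfies y²/x² = (Aλ/3)·z² identically; hence it satisfies the constraint y²/x² = (Aλ/3)z² + kH²/x² if and only if kH² = 0, i.e. only for a flat brane. In particular, near Υ = 0 this (general) solution has x → 0, |y| → ∞, |z| → ∞: the warp factor collapses and the scalar-field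 energy density diverges at a finite distance from the brane. -/
open Filter Topology Set Real

/-- The dominant balance `x = α·Υ^{1/4}`, `y = (α/4)·Υ^{−3/4}`,
`z = (√3/(4√(Aλ)))·Υ^{−1}` is an exact solution of the scalar-field braneworld
system `x′ = y`, `y′ = −λA z² x`, `z′ = −4yz/x` on `(0,∞)`, satisfies
`y²/x² = (Aλ/3)z²` identically, hence satisfies the constraint
`y²/x² = (Aλ/3)z² + kH²/x²` iff `kH² = 0` (flat brane only); and near `Υ = 0`
it has `x → 0`, `|y| → ∞`, `|z| → ∞`: a finite-distance collapse singularity. -/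
theorem scalar_field_braneworld_balance
    (α A lam : ℝ) (hα : α ≠ 0) (hA : 0 < A) (hlam : 0 < lam) :
    ∀ x y z : ℝ → ℝ,
      (∀ Υ : ℝ, x Υ = α * Υ ^ ((1 : ℝ) / 4)) →
      (∀ Υ : ℝ, y Υ = α / 4 * Υ ^ (-(3 : ℝ) / 4)) →
      (∀ Υ : ℝ, z Υ = Real.sqrt 3 / (4 * Real.sqrt (A * lam)) * Υ ^ (-1 : ℝ)) →
      (∀ Υ : ℝ, 0 < Υ → HasDerivAt x (y Υ) Υ) ∧
      (∀ Υ : ℝ, 0 < Υ → HasDerivAt y (-(lam * A) * z Υ ^ 2 * x Υ) Υ) ∧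
      (∀ Υ : ℝ, 0 < Υ → HasDerivAt z (-4 * y Υ * z Υ / x Υ) Υ) ∧
      (∀ Υ : ℝ, 0 < Υ → y Υ ^ 2 / x Υ ^ 2 = A * lam / 3 * z Υ ^ 2) ∧
      (∀ k H : ℝ,
        (∀ Υ : ℝ, 0 < Υ →
          y Υ ^ 2 / x Υ ^ 2 = A * lam / 3 * z Υ ^ 2 + k * H ^ 2 / x Υ ^ 2) ↔
        k * H ^ 2 = 0) ∧
      Tendsto x (𝓝[>] 0) (𝓝 0) ∧
      Tendsto (fun Υ => |y Υ|) (𝓝[>] 0) atTop ∧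
      Tendsto (fun Υ => |z Υ|) (𝓝[>] 0) atTop := by
  intro x y z hx hy hz
  have hAl : 0 < A * lam := mul_pos hA hlam
  obtain ⟨s, hs, hs0⟩ : ∃ s, s = Real.sqrt 3 / (4 * Real.sqrt (A * lam)) ∧ 0 < s :=
    ⟨_, rfl, by positivity⟩
  have hs2 : s ^ 2 * (A * lam) = 3 / 16 := by
    rw [hs, div_pow, mul_pow, Real.sq_sqrt hAl.le, Real.sq_sqrt (by norm_num)]
    field_simp
    norm_num
  rw [← hs] at hz
  have e1 : ∀ Υ : ℝ, 0 < Υ → Υ ^ (-(3 : ℝ) / 4) = Υ ^ ((1 : ℝ) / 4) / Υ := by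
    intro Υ h
    rw [← Real.rpow_sub_one h.ne']
    norm_num
  have e2 : ∀ Υ : ℝ, Υ ^ (-1 : ℝ) = Υ⁻¹ := fun Υ => Real.rpow_neg_one Υ
  have hx0 : ∀ Υ : ℝ, 0 < Υ → x Υ ≠ 0 := by
    intro Υ h
    rw [hx]
    exact mul_ne_zero hα (Real.rpow_pos_of_pos h _).ne'
  have hyx : ∀ Υ : ℝ, 0 < Υ → y Υ = x Υ / (4 * Υ) := by
    intro Υ h
    rw [hx, hy, e1 Υ h]
    field_simp
  have hzz : ∀ Υ : ℝ, z Υ = s * Υ⁻¹ := fun Υ => by rw [hz, e2]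
  have hid : ∀ Υ : ℝ, 0 < Υ → y Υ ^ 2 / x Υ ^ 2 = A * lam / 3 * z Υ ^ 2 := by
    intro Υ h
    have := hx0 Υ h
    rw [hyx Υ h, hzz]
    field_simp
    linarith
  refine ⟨?_, ?_, ?_, hid, ?_, ?_, ?_, ?_⟩
  · intro Υ h
    have hd := (Real.hasDerivAt_rpow_const (p := (1 : ℝ) / 4) (Or.inl h.ne')).const_mul α
    rw [show x = fun Υ => α * Υ ^ ((1 : ℝ) / 4) from funext hx]
    refine hd.congr_deriv (Eq.symm ?_)
    rw [hy, show (1 : ℝ) / 4 - 1 = -3 / 4 by norm_num]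
    ring
  · intro Υ h
    have hd := (Real.hasDerivAt_rpow_const (p := -(3 : ℝ) / 4) (Or.inl h.ne')).const_mul (α / 4)
    rw [show y = fun Υ => α / 4 * Υ ^ (-(3 : ℝ) / 4) from funext hy]
    refine hd.congr_deriv (Eq.symm ?_)
    rw [Real.rpow_sub_one h.ne', e1 Υ h, hzz, hx]
    have h3 : lam * A * (s * Υ⁻¹) ^ 2 = 3 / 16 * (Υ⁻¹) ^ 2 := by
      rw [← hs2]; ring
    rw [neg_mul, h3]
    field_simp
    norm_num
  · intro Υ h
    have hd := (hasDerivAt_inv h.ne').const_mul s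
    rw [show z = fun Υ => s * Υ⁻¹ from funext hzz]
    refine hd.congr_deriv (Eq.symm ?_)
    have := hx0 Υ h
    rw [hyx Υ h]
    field_simp
  · intro k H
    constructor
    · intro hh
      have h1 := hh 1 one_pos
      rw [hid 1 one_pos] at h1
      have h2 : k * H ^ 2 / x 1 ^ 2 = 0 := by linarith
      exact (div_eq_zero_iff.mp h2).resolve_right (pow_ne_zero 2 (hx0 1 one_pos))
    · intro hk Υ h
      rw [hk, hid Υ h]
      simp
  · rw [show x = fun Υ => α * Υ ^ ((1 : ℝ) / 4) from funext hx]
    have hc : ContinuousAt (fun Υ : ℝ => α * Υ ^ ((1 : ℝ) / 4)) 0 :=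
      continuousAt_const.mul (Real.continuousAt_rpow_const _ _ (Or.inr (by norm_num)))
    have := hc.tendsto
    rw [Real.zero_rpow (by norm_num), mul_zero] at this
    exact this.mono_left nhdsWithin_le_nhds
  · have ht : Tendsto (fun Υ : ℝ => |α / 4| * (Υ⁻¹) ^ ((3 : ℝ) / 4)) (𝓝[>] 0) atTop :=
      ((tendsto_rpow_atTop (by norm_num)).comp tendsto_inv_nhdsGT_zero).const_mul_atTop
        (abs_pos.mpr (div_ne_zero hα (by norm_num)))
    refine ht.congr' ?_
    filter_upwards [self_mem_nhdsWithin] with Υ h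
    have h : 0 < Υ := h
    rw [hy, abs_mul, abs_of_pos (Real.rpow_pos_of_pos h _), neg_div, Real.rpow_neg h.le,
      Real.inv_rpow h.le]
  · have ht : Tendsto (fun Υ : ℝ => s * Υ⁻¹) (𝓝[>] 0) atTop :=
      tendsto_inv_nhdsGT_zero.const_mul_atTop hs0
    refine tendsto_abs_atTop_atTop.comp ?_
    rw [show z = fun Υ => s * Υ⁻¹ from funext hzz]
    exact ht
end

section
/- Let α ≠ 0, A > 0 and γ ∈ ℝ with γ ≠ −1 and γ ≠ −1/2, and set p = 1/(2(γ+1)). Define, for Υ ∈ (0,∞), x(Υ) = α·Υ^p, y(Υ) = α·p·Υ^{p−1}, w(Υ) = (3/(2A))·p²·Υ^{−2}. Then (x,y,w) is an exact solution of the perfect-fluid braneworld system x′ = y, y′ = −(2A(1+2γ)/3)·w·x, w′ = −4(1+γ)·(y/x)·w on (0,∞), and it satisfies the flat-brane constraint y²/x² = (2/3)·A·w identically. In particular w → ∞ as Υ → 0⁺, and x → 0 as Υ → 0⁺ when γ > −1/2 (collapse-brane singularity, since then 0 < p), while x → ∞ as Υ → 0⁺ when γ < −1 (big-rip-brane singularity,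 since then p < 0). -/
open Filter Topology Set Real

/-- With `p = 1/(2(γ+1))`, the dominant balance `x = α·Υ^p`,
`y = αp·Υ^{p−1}`, `w = (3/(2A))p²·Υ^{−2}` is an exact solution of the
perfect-fluid braneworld system `x′ = y`, `y′ = −(2A(1+2γ)/3)wx`,
`w′ = −4(1+γ)(y/x)w` on `(0,∞)` satisfying the flat-brane constraint
`y²/x² = (2/3)Aw` identically; `w → ∞` as `Υ → 0⁺`, and `x → 0` when
`γ > −1/2` (collapse-brane, `0 < p`) while `|x| → ∞` when `γ < −1`
(big-rip-brane, `p < 0`). -/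
theorem perfect_fluid_braneworld_balance
    (α A γ : ℝ) (hα : α ≠ 0) (hA : 0 < A) (hγ1 : γ ≠ -1) (hγ2 : γ ≠ -(1/2)) :
    ∀ p : ℝ, p = 1 / (2 * (γ + 1)) →
    ∀ x y w : ℝ → ℝ,
      (∀ Υ : ℝ, x Υ = α * Υ ^ p) →
      (∀ Υ : ℝ, y Υ = α * p * Υ ^ (p - 1)) →
      (∀ Υ : ℝ, w Υ = 3 / (2 * A) * p ^ 2 * Υ ^ (-2 : ℝ)) →
      (∀ Υ : ℝ, 0 < Υ → HasDerivAt x (y Υ) Υ) ∧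
      (∀ Υ : ℝ, 0 < Υ → HasDerivAt y (-(2 * A * (1 + 2 * γ) / 3) * w Υ * x Υ) Υ) ∧
      (∀ Υ : ℝ, 0 < Υ → HasDerivAt w (-4 * (1 + γ) * (y Υ / x Υ) * w Υ) Υ) ∧
      (∀ Υ : ℝ, 0 < Υ → y Υ ^ 2 / x Υ ^ 2 = 2 / 3 * A * w Υ) ∧
      Tendsto w (𝓝[>] 0) atTop ∧
      (γ > -(1/2) → 0 < p ∧ Tendsto x (𝓝[>] 0) (𝓝 0)) ∧
      (γ < -1 → p < 0 ∧ Tendsto (fun Υ => |x Υ|) (𝓝[>] 0) atTop) := by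
  intro p hp x y w hx hy hw
  have hg : γ + 1 ≠ 0 := fun h => hγ1 (by linarith)
  have hpg : 2 * (γ + 1) * p = 1 := by rw [hp]; field_simp
  have hp0 : p ≠ 0 := by rintro rfl; simp at hpg
  have hA0 : A ≠ 0 := hA.ne'
  obtain rfl : x = fun Υ => α * Υ ^ p := funext hx
  obtain rfl : y = fun Υ => α * p * Υ ^ (p - 1) := funext hy
  obtain rfl : w = fun Υ => 3 / (2 * A) * p ^ 2 * Υ ^ (-2 : ℝ) := funext hw
  clear hx hy hw
  have e1 : ∀ Υ : ℝ, 0 < Υ → Υ ^ (p - 1) = Υ ^ p / Υ := fun Υ h => Real.rpow_sub_one h.ne' p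
  have e2 : ∀ Υ : ℝ, 0 < Υ → Υ ^ (p - 1 - 1) = Υ ^ p / Υ / Υ := fun Υ h => by
    rw [Real.rpow_sub_one h.ne', e1 Υ h]
  have e3 : ∀ Υ : ℝ, 0 < Υ → Υ ^ (-2 : ℝ) = 1 / Υ ^ 2 := fun Υ h => by
    rw [Real.rpow_neg h.le]; norm_num
  have e4 : ∀ Υ : ℝ, 0 < Υ → Υ ^ (-2 - 1 : ℝ) = 1 / Υ ^ 2 / Υ := fun Υ h => by
    rw [Real.rpow_sub_one h.ne', e3 Υ h]
  have blow : ∀ q : ℝ, q < 0 → Tendsto (fun Υ : ℝ => Υ ^ q) (𝓝[>] 0) atTop := by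
    intro q hq
    exact tendsto_rpow_neg_nhdsGT_zero hq
  refine ⟨?_, ?_, ?_, ?_, ?_, ?_, ?_⟩
  · intro Υ h
    have := (Real.hasDerivAt_rpow_const (p := p) (Or.inl h.ne')).const_mul α
    refine this.congr_deriv ?_
    ring
  · intro Υ h
    have := (Real.hasDerivAt_rpow_const (p := p - 1) (Or.inl h.ne')).const_mul (α * p)
    refine this.congr_deriv ?_
    simp only [e2 Υ h, e3 Υ h]
    field_simp
    linear_combination hpg
  · intro Υ h
    have hP : Υ ^ p ≠ 0 := (Real.rpow_pos_of_pos h p).ne'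
    have := (Real.hasDerivAt_rpow_const (p := (-2 : ℝ)) (Or.inl h.ne')).const_mul
      (3 / (2 * A) * p ^ 2)
    refine this.congr_deriv ?_
    simp only [e1 Υ h, e3 Υ h, e4 Υ h]
    field_simp
    linear_combination 2 * hpg
  · intro Υ h
    have hP : Υ ^ p ≠ 0 := (Real.rpow_pos_of_pos h p).ne'
    simp only [e1 Υ h, e3 Υ h]
    field_simp
  · exact (blow (-2) (by norm_num)).const_mul_atTop (by positivity)
  · intro h
    have hpp : 0 < p := by rw [hp]; apply one_div_pos.mpr; linarith
    refine ⟨hpp, ?_⟩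
    have := ((Real.continuousAt_rpow_const 0 p (Or.inr hpp.le)).tendsto.const_mul α)
    rw [Real.zero_rpow hp0, mul_zero] at this
    exact this.mono_left nhdsWithin_le_nhds
  · intro h
    have hpn : p < 0 := by rw [hp]; apply one_div_neg.mpr; linarith
    refine ⟨hpn, ?_⟩
    have := (blow p hpn).const_mul_atTop (abs_pos.mpr hα)
    refine this.congr' ?_
    filter_upwards [self_mem_nhdsWithin] with Υ hΥ
    rw [abs_mul, abs_of_pos (Real.rpow_pos_of_pos hΥ p)]
end

section
/- Let a_i > 0 and define a : ℝ → ℝ by a(t) = a_i·(1 + exp(√2·t/a_i))^{1/2}. Then the Hubble rate H(t) = a′(t)/a(t) equals (√2/(2a_i))·e^{√2 t/a_i}/(1 + e^{√2 t/a_i}); H(t) → 0 as t → −∞; and H is integrable on (−∞, 0]. Moreover a(t) ≥ a_i for all t, so the scale factor is bounded below by a positive constant. -/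
open Filter Topology Set MeasureTheory

/-- For Harris's closed radiation-plus-Λ solution
`a(t) = a_i·(1 + exp(√2 t/a_i))^{1/2}` with `a_i > 0`: the Hubble rate
`H = a′/a` equals `(√2/(2a_i))·e^{√2 t/a_i}/(1 + e^{√2 t/a_i})`, tends to `0`
as `t → −∞`, and is integrable on `(−∞,0]`; moreover `a(t) ≥ a_i` for all
`t`, so the scale factor is bounded below by a positive constant. -/
theorem harris_solution_complete
    (a_i : ℝ) (hai : 0 < a_i) :
    ∀ a : ℝ → ℝ,
      (∀ t, a t = a_i * (1 + Real.exp (Real.sqrt 2 * t / a_i)) ^ ((1 : ℝ) / 2)) →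
      (∀ t, deriv a t / a t =
        Real.sqrt 2 / (2 * a_i) * Real.exp (Real.sqrt 2 * t / a_i) /
          (1 + Real.exp (Real.sqrt 2 * t / a_i))) ∧
      Tendsto (fun t => deriv a t / a t) atBot (𝓝 0) ∧
      IntegrableOn (fun t => deriv a t / a t) (Set.Iic 0) ∧
      (∀ t, a_i ≤ a t) := by
  intro a ha
  have hs2 : 0 < Real.sqrt 2 := Real.sqrt_pos.mpr (by norm_num)
  have hE : ∀ t : ℝ, HasDerivAt (fun t : ℝ => Real.exp (Real.sqrt 2 * t / a_i))
      (Real.exp (Real.sqrt 2 * t / a_i) * (Real.sqrt 2 / a_i)) t := by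
    intro t
    have h1 : HasDerivAt (fun t : ℝ => Real.sqrt 2 * t / a_i) (Real.sqrt 2 / a_i) t := by
      simpa using ((hasDerivAt_id t).const_mul (Real.sqrt 2)).div_const a_i
    exact h1.exp
  have hfun : a = fun t => a_i * Real.sqrt (1 + Real.exp (Real.sqrt 2 * t / a_i)) := by
    funext t
    rw [ha, ← Real.sqrt_eq_rpow]
  have hH : ∀ t, deriv a t / a t =
        Real.sqrt 2 / (2 * a_i) * Real.exp (Real.sqrt 2 * t / a_i) /
          (1 + Real.exp (Real.sqrt 2 * t / a_i)) := by
    intro t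
    have hpos : 0 < 1 + Real.exp (Real.sqrt 2 * t / a_i) := by positivity
    have hd := (((hE t).const_add 1).sqrt hpos.ne').const_mul a_i
    rw [hfun, hd.deriv]
    beta_reduce
    have hsp := Real.sqrt_pos.mpr hpos
    have hsq := Real.sq_sqrt hpos.le
    set E := Real.exp (Real.sqrt 2 * t / a_i)
    set S := Real.sqrt (1 + E)
    rw [← hsq]
    field_simp
  have hpos : ∀ t, 0 < Real.exp (Real.sqrt 2 * t / a_i) := fun t => Real.exp_pos _
  have hc : 0 < Real.sqrt 2 / (2 * a_i) := by positivity
  have hb0 : ∀ t, 0 ≤ deriv a t / a t := by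
    intro t
    rw [hH]
    positivity
  have hb : ∀ t, deriv a t / a t ≤
      Real.sqrt 2 / (2 * a_i) * Real.exp (Real.sqrt 2 * t / a_i) := by
    intro t
    rw [hH]
    exact div_le_self (by positivity) (by linarith [hpos t])
  have hcont : Continuous (fun t => deriv a t / a t) := by
    rw [funext hH]
    refine Continuous.div (by fun_prop) (by fun_prop) ?_
    intro t
    have := hpos t
    positivity
  refine ⟨hH, ?_, ?_, ?_⟩
  · refine squeeze_zero hb0 hb ?_
    have h1 : Tendsto (fun t : ℝ => Real.sqrt 2 * t / a_i) atBot atBot :=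
      (tendsto_id.const_mul_atBot hs2).atBot_div_const hai
    simpa using (Real.tendsto_exp_atBot.comp h1).const_mul (Real.sqrt 2 / (2 * a_i))
  · have h1 : IntegrableOn (fun t : ℝ => Real.exp (Real.sqrt 2 / a_i * t)) (Set.Iic 0) :=
      integrableOn_exp_mul_Iic (by positivity) 0
    refine Integrable.mono' (h1.const_mul (Real.sqrt 2 / (2 * a_i)))
      hcont.aestronglyMeasurable (Eventually.of_forall fun t => ?_)
    rw [Real.norm_of_nonneg (hb0 t), show Real.sqrt 2 / a_i * t = Real.sqrt 2 * t / a_i by ring]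
    exact hb t
  · intro t
    rw [hfun]
    have : 1 ≤ Real.sqrt (1 + Real.exp (Real.sqrt 2 * t / a_i)) :=
      Real.one_le_sqrt.mpr (by linarith [hpos t])
    exact le_mul_of_one_le_right hai.le this
end

section
/- Let A > 0 and H > 0 and define a : ℝ → ℝ by a(t) = A·cosh(Ht) (the closed de Sitter universe, k = 1). Then: (i) for every t > 0 the closed-trapped-surface condition holds at r = π/2, i.e. a′(t) = AH·sinh(Ht) > 0 = |cot(π/2)|; (ii) nevertheless the electric parts of the Bel-Robinson energy are bounded on ℝ: |E|(t) = √3·|a″(t)/a(t)| = √3·H² for all t, and |D|(t) = √3·(a′(t)²/a(t)² + 1/a(t)²) = √3·(H²·tanh²(Ht) + 1/(A²cosh²(Ht))) ≤ √3·(H² + 1/A²) for all t. Hence the existence of closed trapped surfaces is compatible with a bounded Bel-Robinson energy (and with geodesic completeness) in de Sitter space. -/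
open Real

/-- For the closed de Sitter universe `a(t) = A·cosh(Ht)`:
(i) for every `t > 0` the closed-trapped-surface condition holds at `r = π/2`,
i.e. `a′(t) = AH·sinh(Ht) > |cot(π/2)|`; (ii) nevertheless the electric parts
of the Bel-Robinson energy are bounded: `|E|(t) = √3·|a″/a| = √3·H²` and
`|D|(t) = √3·(a′²/a² + 1/a²) = √3·(H²tanh²(Ht) + 1/(A²cosh²(Ht))) ≤
√3·(H² + 1/A²)` for all `t`. Closed trapped surfaces are thus compatible with
bounded Bel-Robinson energy (and geodesic completeness) in de Sitter space. -/
theorem deSitter_trapped_surfaces_bounded_BelRobinson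
    (A H : ℝ) (hA : 0 < A) (hH : 0 < H) :
    ∀ a : ℝ → ℝ, (∀ t, a t = A * Real.cosh (H * t)) →
      (∀ t : ℝ, 0 < t →
        deriv a t = A * H * Real.sinh (H * t) ∧
        A * H * Real.sinh (H * t) > |Real.cot (π / 2)|) ∧
      (∀ t : ℝ,
        Real.sqrt 3 * |deriv (deriv a) t / a t| = Real.sqrt 3 * H ^ 2) ∧
      (∀ t : ℝ,
        Real.sqrt 3 * ((deriv a t) ^ 2 / a t ^ 2 + 1 / a t ^ 2) =
          Real.sqrt 3 * (H ^ 2 * Real.tanh (H * t) ^ 2 +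
            1 / (A ^ 2 * Real.cosh (H * t) ^ 2))) ∧
      (∀ t : ℝ,
        Real.sqrt 3 * ((deriv a t) ^ 2 / a t ^ 2 + 1 / a t ^ 2) ≤
          Real.sqrt 3 * (H ^ 2 + 1 / A ^ 2)) := by
  intro a ha
  have hfun : a = fun t => A * Real.cosh (H * t) := funext ha
  have hlin : ∀ t : ℝ, HasDerivAt (fun t : ℝ => H * t) H t := fun t => by
    simpa using (hasDerivAt_id t).const_mul H
  have h1 : deriv a = fun t => A * H * Real.sinh (H * t) := by
    funext t
    rw [hfun]
    have h := ((hlin t).cosh.const_mul A).deriv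
    rw [h]
    ring
  have h2 : ∀ t, deriv (deriv a) t = A * H ^ 2 * Real.cosh (H * t) := by
    intro t
    rw [h1]
    have h := ((hlin t).sinh.const_mul (A * H)).deriv
    rw [h]
    ring
  have h3 : ∀ t : ℝ, (deriv a t) ^ 2 / a t ^ 2 + 1 / a t ^ 2 =
      H ^ 2 * Real.tanh (H * t) ^ 2 + 1 / (A ^ 2 * Real.cosh (H * t) ^ 2) := by
    intro t
    have hc := Real.cosh_pos (H * t)
    rw [h1, ha, Real.tanh_eq_sinh_div_cosh]
    field_simp
  refine ⟨fun t ht => ⟨by rw [h1], ?_⟩, fun t => ?_, fun t => by rw [h3], fun t => ?_⟩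
  · have hs : 0 < Real.sinh (H * t) := Real.sinh_pos_iff.2 (mul_pos hH ht)
    rw [Real.cot_eq_cos_div_sin, Real.cos_pi_div_two, zero_div, abs_zero]
    positivity
  · have hc := Real.cosh_pos (H * t)
    have h : deriv (deriv a) t / a t = H ^ 2 := by
      rw [h2, ha]
      field_simp
    rw [h, abs_of_nonneg (sq_nonneg H)]
  · rw [h3]
    have hc := Real.one_le_cosh (H * t)
    have hc0 := Real.cosh_pos (H * t)
    have ht : Real.tanh (H * t) ^ 2 ≤ 1 := by
      rw [Real.tanh_eq_sinh_div_cosh, div_pow, div_le_one (by positivity)]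
      linarith [Real.cosh_sq (H * t)]
    have hq : 1 / (A ^ 2 * Real.cosh (H * t) ^ 2) ≤ 1 / A ^ 2 := by
      apply one_div_le_one_div_of_le (by positivity)
      exact le_mul_of_one_le_right (by positivity) (one_le_pow₀ hc)
    have hm : H ^ 2 * Real.tanh (H * t) ^ 2 ≤ H ^ 2 :=
      mul_le_of_le_one_right (by positivity) ht
    exact mul_le_mul_of_nonneg_left (add_le_add hm hq) (Real.sqrt_nonneg 3)
end
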